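/- Soundness of rule L3: Let K be a statistical ALC knowledge base and A, B ALC concepts such that every model I of K satisfies B^I ⊆ A^I. If K ⊨_l (B|⊤)[m,1] for a rational m with 0 ≤ m ≤ 1, then K ⊨_l (A|⊤)[m,1]. -/

import Mathlib

open scoped Classical

/-- ALC concepts over concept names and role names (both drawn from ℕ,
regarded as disjoint name spaces). -/
inductive Cpt : Type where
  | top : Cpt
  | atom : ℕ → Cpt
  | neg : Cpt → Cpt
  | inter : Cpt → Cpt → Cpt
  | ex : ℕ → Cpt → Cpt
deriving DecidableEq

/-- A finite interpretation with domain drawn from the type `α`. -/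
structure Interp (α : Type) where
  dom : Finset α
  dom_nonempty : dom.Nonempty
  conc : ℕ → Finset α
  conc_sub : ∀ a, conc a ⊆ dom
  role : ℕ → Finset (α × α)
  role_sub : ∀ r, role r ⊆ dom ×ˢ dom

/-- The extension `C^I` of a concept. -/
noncomputable def Interp.ext {α : Type} (I : Interp α) : Cpt → Finset α
  | .top => I.dom
  | .atom a => I.conc a
  | .neg c => I.dom \ I.ext c
  | .inter c d => I.ext c ∩ I.ext d
  | .ex r c => I.dom.filter (fun d => ∃ e ∈ I.ext c, (d, e) ∈ I.role r)

/-- `[C]^I`, the cardinality of the extension of `C`. -/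
noncomputable def cardC {α : Type} (I : Interp α) (c : Cpt) : ℕ := (I.ext c).card

/-- A probabilistic conditional `(C|D)[l,u]`. -/
structure Cond : Type where
  C : Cpt
  D : Cpt
  l : ℚ
  u : ℚ
deriving DecidableEq

/-- `I ⊨ (C|D)[l,u]` iff `[D]^I = 0` or `l ≤ [C ⊓ D]^I/[D]^I ≤ u`. -/
def satCond {α : Type} (I : Interp α) (κ : Cond) : Prop :=
  cardC I κ.D = 0 ∨
    (κ.l ≤ (cardC I (.inter κ.C κ.D) : ℚ) / (cardC I κ.D : ℚ) ∧
     (cardC I (.inter κ.C κ.D) : ℚ) / (cardC I κ.D : ℚ) ≤ κ.u)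

/-- Finite interpretations (with domain drawn from the countable set ℕ). -/
abbrev FInterp := Interp ℕ

/-- The models of a knowledge base (finite set of conditionals). -/
def Models (K : Finset Cond) : Set FInterp := {I | ∀ κ ∈ K, satCond I κ}

/-- l-entailment: every model of `K` satisfies the conditional. -/
def entailsL (K : Finset Cond) (κ : Cond) : Prop := ∀ I ∈ Models K, satCond I κ

section

variable {α : Type} {I : Interp α} {A B C D : Cpt}

theorem Interp.mem_ext_inter {x : α} : x ∈ I.ext (.inter C D) ↔ x ∈ I.ext C ∧ x ∈ I.ext D := by
  rw [Interp.ext, Finset.mem_inter]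

theorem Interp.ext_inter_subset_left : I.ext (.inter C D) ⊆ I.ext C :=
  fun _ hx => (mem_ext_inter.mp hx).1

theorem Interp.ext_inter_subset_right : I.ext (.inter C D) ⊆ I.ext D :=
  fun _ hx => (mem_ext_inter.mp hx).2

theorem Interp.subset_ext_inter (hC : I.ext B ⊆ I.ext C) (hD : I.ext B ⊆ I.ext D) :
    I.ext B ⊆ I.ext (.inter C D) :=
  fun _ hx => mem_ext_inter.mpr ⟨hC hx, hD hx⟩

theorem cardC_mono (h : I.ext C ⊆ I.ext D) : cardC I C ≤ cardC I D :=
  Finset.card_le_card h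

theorem satCond_one_of_ext_inter_subset {l u : ℚ} (h : I.ext (.inter B D) ⊆ I.ext A)
    (hB : satCond I ⟨B, D, l, u⟩) : satCond I ⟨A, D, l, 1⟩ := by
  have hBA : cardC I (.inter B D) ≤ cardC I (.inter A D) :=
    cardC_mono (Interp.subset_ext_inter h Interp.ext_inter_subset_right)
  have hAD : cardC I (.inter A D) ≤ cardC I D := cardC_mono Interp.ext_inter_subset_right
  refine hB.imp_right fun ⟨hl, _⟩ => ⟨hl.trans ?_, ?_⟩
  · exact div_le_div_of_nonneg_right (Nat.cast_le.mpr hBA) (Nat.cast_nonneg _)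
  · exact div_le_one_of_le₀ (Nat.cast_le.mpr hAD) (Nat.cast_nonneg _)

end

theorem rule_L3_sound_general {K : Finset Cond} {A B D : Cpt} {l u : ℚ}
    (hsub : ∀ I ∈ Models K, I.ext (.inter B D) ⊆ I.ext A)
    (hent : entailsL K ⟨B, D, l, u⟩) : entailsL K ⟨A, D, l, 1⟩ :=
  fun I hI => satCond_one_of_ext_inter_subset (hsub I hI) (hent I hI)

/-- Soundness of rule L3. -/
theorem rule_L3_sound (K : Finset Cond) (A B : Cpt)
    (hsub : ∀ I ∈ Models K, I.ext B ⊆ I.ext A)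
    (m : ℚ) (hm0 : 0 ≤ m) (hm1 : m ≤ 1)
    (hent : entailsL K ⟨B, .top, m, 1⟩) :
    entailsL K ⟨A, .top, m, 1⟩ :=
  rule_L3_sound_general (fun I hI => Interp.ext_inter_subset_left.trans (hsub I hI)) hent
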